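/- arXiv:2012.12897 — 2 statements merged into one kernel-verified Lean document; each statement's English description precedes it below -/
import Mathlib

section
/- Let G be a graph with a feedback vertex set of size one (i.e., there is a vertex whose deletion leaves a forest). Then there exist N ∈ ℕ and a polynomial p(m) such that the DP color function satisfies P_DP(G, m) = p(m) for all m ≥ N. -/
/-- An `m`-fold cover of `G`, presented on the vertex set `V × Fin m` with lists
`L v = {v} × Fin m`: each list is a clique, cross-edges join only lists of
adjacent vertices of `G`, and the cross-edges between two lists form a matching. -/
structure IsDPCover {V : Type*} (G : SimpleGraph V) (m : ℕ)
    (H : SimpleGraph (V × Fin m)) : Prop where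
  listClique : ∀ (v : V) (j j' : Fin m), j ≠ j' → H.Adj (v, j) (v, j')
  cross : ∀ (u v : V) (j j' : Fin m), u ≠ v → H.Adj (u, j) (v, j') → G.Adj u v
  matching₁ : ∀ (u v : V) (j j₁ j₂ : Fin m), u ≠ v →
    H.Adj (u, j) (v, j₁) → H.Adj (u, j) (v, j₂) → j₁ = j₂
  matching₂ : ∀ (u v : V) (j₁ j₂ j : Fin m), u ≠ v →
    H.Adj (u, j₁) (v, j) → H.Adj (u, j₂) (v, j) → j₁ = j₂

/-- The number of `H`-colorings: independent transversals of the cover `H`,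
recorded as functions picking one vertex from each list. -/
noncomputable def coverColorings {V : Type*} (m : ℕ) (H : SimpleGraph (V × Fin m)) : ℕ :=
  Nat.card {f : V → Fin m // ∀ u v : V, ¬ H.Adj (u, f u) (v, f v)}

/-- The DP color function `P_DP(G, m)`: the minimum number of `H`-colorings over
all `m`-fold covers `H` of `G`. -/
noncomputable def dpColorFunction {V : Type*} (G : SimpleGraph V) (m : ℕ) : ℕ :=
  sInf {n | ∃ H : SimpleGraph (V × Fin m), IsDPCover G m H ∧ n = coverColorings m H}

open Polynomial

section KernelCounting

theorem Nat.card_fun_ker_eq {Y C : Type*} [Finite Y] [Finite C] (s : Setoid Y) :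
    Nat.card {h : Y → C // Setoid.ker h = s} =
      (Nat.card C).descFactorial (Nat.card (Quotient s)) := by
  classical
  have := Fintype.ofFinite C
  have := Fintype.ofFinite (Quotient s)
  let e : {h : Y → C // Setoid.ker h = s} ≃ (Quotient s ↪ C) :=
    { toFun := fun h => ⟨Quotient.lift h.1 fun a b hab => by
          have : Setoid.ker h.1 a b := by rw [h.2]; exact hab
          exact this, by
        rintro ⟨a⟩ ⟨b⟩ hab
        refine Quotient.sound ?_
        have : Setoid.ker h.1 a b := hab
        rwa [h.2] at this⟩
      invFun := fun k => ⟨fun y => k ⟦y⟧, by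
        ext a b
        rw [Setoid.ker_def, k.injective.eq_iff, Quotient.eq]⟩
      left_inv := fun h => rfl
      right_inv := fun k => by
        ext ⟨a⟩
        rfl }
  rw [Nat.card_congr e, Nat.card_eq_fintype_card, Fintype.card_embedding_eq,
    Nat.card_eq_fintype_card, Nat.card_eq_fintype_card]

instance Setoid.instFinite {Y : Type*} [Finite Y] : Finite (Setoid Y) :=
  Finite.of_injective (fun s : Setoid Y => fun a b => s a b) fun _ _ h =>
    Setoid.ext fun a b => iff_of_eq (congrFun (congrFun h a) b)

theorem Nat.card_fun_ker_mem {Y C : Type*} [Finite Y] [Finite C] (P : Setoid Y → Prop)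
    [Fintype {s // P s}] :
    Nat.card {h : Y → C // P (Setoid.ker h)} =
      ∑ s : {s // P s}, (Nat.card C).descFactorial (Nat.card (Quotient s.1)) := by
  let e : {h : Y → C // P (Setoid.ker h)} ≃
      Σ s : {s // P s}, {h : Y → C // Setoid.ker h = s.1} :=
    { toFun := fun h => ⟨⟨_, h.2⟩, ⟨h.1, rfl⟩⟩
      invFun := fun h => ⟨h.2.1, h.2.2.symm ▸ h.1.2⟩
      left_inv := fun h => rfl
      right_inv := by
        rintro ⟨⟨s, hs⟩, ⟨h, hh⟩⟩
        change Setoid.ker h = s at hh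
        subst hh
        rfl }
  rw [Nat.card_congr e, Nat.card_sigma]
  exact Finset.sum_congr rfl fun s _ => Nat.card_fun_ker_eq s.1

theorem Equiv.Perm.exists_extend {C : Type*} [Finite C] (s : Set C) (f : C → C)
    (hf : Set.InjOn f s) : ∃ e : Equiv.Perm C, ∀ c ∈ s, e c = f c := by
  classical
  have := Fintype.ofFinite C
  obtain ⟨g, hg⟩ := Set.MapsTo.exists_equiv_extend_of_card_eq (t := (Finset.univ : Finset C))
    rfl (fun _ _ => by simp) hf
  exact ⟨g.trans (Equiv.subtypeUnivEquiv (by simp)), hg⟩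

theorem Equiv.Perm.exists_comp_eq_of_ker_eq {X C : Type*} [Finite C] {x y : X → C}
    (h : Setoid.ker x = Setoid.ker y) : ∃ e : Equiv.Perm C, ∀ a, e (x a) = y a := by
  have key : ∀ a b, x a = x b ↔ y a = y b := fun a b => by
    rw [← Setoid.ker_def, h, Setoid.ker_def]
  have hx : ∀ c : Set.range x, ∃ a, x a = c := fun c => c.2
  choose k hk using hx
  classical
  obtain ⟨e, he⟩ := Equiv.Perm.exists_extend (Set.range x)
    (fun c => if hc : c ∈ Set.range x then y (k ⟨c, hc⟩) else c) (by
      intro c hc d hd hcd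
      simp only [hc, hd, dif_pos] at hcd
      rw [← key, hk, hk] at hcd
      exact hcd)
  refine ⟨e, fun a => ?_⟩
  rw [he _ ⟨a, rfl⟩, dif_pos ⟨a, rfl⟩, ← key, hk]

theorem Nat.card_extension_eq_of_ker_eq {X W C : Type*} [Finite C]
    (Q : Setoid (X ⊕ W) → Prop) {x y : X → C} (h : Setoid.ker x = Setoid.ker y) :
    Nat.card {g : W → C // Q (Setoid.ker (Sum.elim x g))} =
      Nat.card {g : W → C // Q (Setoid.ker (Sum.elim y g))} := by
  obtain ⟨e, he⟩ := Equiv.Perm.exists_comp_eq_of_ker_eq h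
  refine Nat.card_congr ((Equiv.arrowCongr (Equiv.refl W) e).subtypeEquiv fun g => ?_)
  have : Sum.elim y (Equiv.arrowCongr (Equiv.refl W) e g) = e ∘ Sum.elim x g := by
    ext (a | a)
    · exact (he a).symm
    · rfl
  rw [this]
  refine iff_of_eq (congrArg Q (Setoid.ext fun a b => ?_))
  simp [Setoid.ker_def]

/-- The number of extensions of `x` to a further finite set with a prescribed type of kernel
depends only on the kernel of `x`, and polynomially on the number of colors. -/
theorem exists_polynomial_card_extension {X W : Type*} [Finite X] [Finite W]
    (Q : Setoid (X ⊕ W) → Prop) (r : Setoid X) :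
    ∃ p : ℤ[X], ∀ m : ℕ, ∀ x : X → Fin m, Setoid.ker x = r →
      (Nat.card {g : W → Fin m // Q (Setoid.ker (Sum.elim x g))} : ℤ) = p.eval (m : ℤ) := by
  classical
  let P : Setoid (X ⊕ W) → Prop := fun s => s.comap Sum.inl = r ∧ Q s
  have := Fintype.ofFinite {s // P s}
  refine ⟨∑ s : {s // P s},
    (descPochhammer ℤ (Nat.card (Quotient s.1) - Nat.card (Quotient r))).comp
      (Polynomial.X - Polynomial.C (Nat.card (Quotient r) : ℤ)), fun m x hx => ?_⟩
  have hle : ∀ s : {s // P s}, Nat.card (Quotient r) ≤ Nat.card (Quotient s.1) := by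
    rintro ⟨s, rfl, -⟩
    refine Nat.card_le_card_of_injective
      (Quotient.map' (s₁ := s.comap Sum.inl) (s₂ := s) Sum.inl fun a b h => h) ?_
    rintro ⟨a⟩ ⟨b⟩ h
    exact Quotient.sound' (show s (Sum.inl a) (Sum.inl b) from Quotient.exact' h)
  have hrm : Nat.card (Quotient r) ≤ m := by
    subst hx
    simpa using Nat.card_le_card_of_injective _ (Setoid.kerLift_injective x)
  let e : {h : X ⊕ W → Fin m // P (Setoid.ker h)} ≃
      Σ y : {y : X → Fin m // Setoid.ker y = r},
        {g : W → Fin m // Q (Setoid.ker (Sum.elim y.1 g))} :=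
    { toFun := fun h => ⟨⟨h.1 ∘ Sum.inl, h.2.1⟩, ⟨h.1 ∘ Sum.inr, by
        rw [Sum.elim_comp_inl_inr]; exact h.2.2⟩⟩
      invFun := fun z => ⟨Sum.elim z.1.1 z.2.1, z.1.2, z.2.2⟩
      left_inv := fun h => Subtype.ext (Sum.elim_comp_inl_inr h.1)
      right_inv := fun z => rfl }
  have := Fintype.ofFinite {y : X → Fin m // Setoid.ker y = r}
  have hcount := Nat.card_congr e
  rw [Nat.card_fun_ker_mem, Nat.card_sigma, Finset.sum_congr rfl fun y _ =>
    Nat.card_extension_eq_of_ker_eq Q (y.2.trans hx.symm), Finset.sum_const, Finset.card_univ,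
    ← Nat.card_eq_fintype_card, Nat.card_fun_ker_eq, smul_eq_mul, Nat.card_fin,
    Finset.sum_congr rfl fun s _ => (Nat.descFactorial_mul_descFactorial (hle s)).symm,
    ← Finset.sum_mul, mul_comm] at hcount
  have hpos : 0 < m.descFactorial (Nat.card (Quotient r)) :=
    Nat.pos_of_ne_zero (by simpa [Nat.descFactorial_eq_zero_iff_lt] using hrm)
  rw [← Nat.eq_of_mul_eq_mul_left hpos hcount, eval_finsetSum, Nat.cast_sum]
  refine Finset.sum_congr rfl fun s _ => ?_
  rw [eval_comp, eval_sub, eval_X, eval_C, ← Nat.cast_sub hrm,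
    descPochhammer_eval_eq_descFactorial]

end KernelCounting

section EventualMinimum

theorem Polynomial.eventually_eval_nonneg_or_nonpos (p : ℤ[X]) :
    (∀ᶠ m : ℕ in Filter.atTop, 0 ≤ p.eval (m : ℤ)) ∨
      ∀ᶠ m : ℕ in Filter.atTop, p.eval (m : ℤ) ≤ 0 := by
  have key : ∀ q : ℤ[X], 0 ≤ q.leadingCoeff →
      ∀ᶠ m : ℕ in Filter.atTop, 0 ≤ q.eval (m : ℤ) := by
    intro q hq
    rcases le_or_gt q.degree 0 with hd | hd
    · rw [eq_C_of_degree_le_zero hd] at hq ⊢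
      exact .of_forall fun _ => by simpa only [eval_C, leadingCoeff_C] using hq
    · have hinj : Function.Injective (Int.castRingHom ℝ) := Int.cast_injective
      have ht := Polynomial.tendsto_atTop_of_leadingCoeff_nonneg (q.map (Int.castRingHom ℝ))
        (by rwa [degree_map_eq_of_injective hinj])
        (by rw [leadingCoeff_map_of_injective hinj, eq_intCast]; exact_mod_cast hq)
      filter_upwards [(ht.comp tendsto_natCast_atTop_atTop).eventually_ge_atTop 0] with m hm
      have : ((m : ℕ) : ℝ) = Int.castRingHom ℝ (m : ℤ) := by simp
      rw [Function.comp_apply, this, eval_map_apply, eq_intCast] at hm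
      exact_mod_cast hm
  rcases le_total 0 p.leadingCoeff with h | h
  · exact .inl (key p h)
  · refine .inr ((key (-p) (by simpa using h)).mono fun m hm => ?_)
    simpa using hm

theorem Polynomial.exists_eventually_le {ι : Type*} [Finite ι] [Nonempty ι] (p : ι → ℤ[X]) :
    ∃ i, ∀ᶠ m : ℕ in Filter.atTop, ∀ j, (p i).eval (m : ℤ) ≤ (p j).eval (m : ℤ) := by
  classical
  have := Fintype.ofFinite ι
  suffices h : ∀ s : Finset ι, s.Nonempty → ∃ i, ∀ᶠ m : ℕ in Filter.atTop,
      ∀ j ∈ s, (p i).eval (m : ℤ) ≤ (p j).eval (m : ℤ) by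
    simpa using h Finset.univ Finset.univ_nonempty
  intro s hs
  induction hs using Finset.Nonempty.cons_induction with
  | singleton a => exact ⟨a, by simp⟩
  | cons a s ha hs ih =>
    obtain ⟨i, hi⟩ := ih
    rcases (p a - p i).eventually_eval_nonneg_or_nonpos with h | h
    · refine ⟨i, ?_⟩
      filter_upwards [hi, h] with m hm hm'
      simp only [eval_sub] at hm'
      simp only [Finset.mem_cons, forall_eq_or_imp]
      exact ⟨by linarith, hm⟩
    · refine ⟨a, ?_⟩
      filter_upwards [hi, h] with m hm hm'
      simp only [eval_sub] at hm'
      simp only [Finset.mem_cons, forall_eq_or_imp]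
      exact ⟨le_rfl, fun j hj => by linarith [hm j hj]⟩

end EventualMinimum

section Gauge

/-- Group-valued edge labels on a finite acyclic graph come from a vertex potential. -/
theorem SimpleGraph.IsAcyclic.exists_potential {W Γ : Type*} [Finite W] [Group Γ]
    {T : SimpleGraph W} (hT : T.IsAcyclic) (P : W → W → Γ → Prop)
    (hP : ∀ u v s, P u v s → P v u s⁻¹) (hex : ∀ u v, T.Adj u v → ∃ s, P u v s) :
    ∃ τ : W → Γ, ∀ u v, T.Adj u v → P u v ((τ v)⁻¹ * τ u) := by
  classical
  induction T using WellFoundedLT.induction with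
  | ind T ih =>
    by_cases hne : ∃ u v, T.Adj u v
    · obtain ⟨a, b, hab⟩ := hne
      have hlt : T.deleteEdges {s(a, b)} < T := by
        refine lt_of_le_of_ne (T.deleteEdges_le _) fun h => ?_
        rw [← h, deleteEdges_adj] at hab
        exact hab.2 rfl
      obtain ⟨τ, hτ⟩ := ih _ hlt (hT.anti hlt.le) fun u v h => hex u v (hlt.le h)
      obtain ⟨s, hs⟩ := hex a b hab
      have hbr := isBridge_iff.mp (isAcyclic_iff_forall_adj_isBridge.mp hT hab)
      set T' := T.deleteEdges {s(a, b)}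
      let ρ : Γ := τ a * s⁻¹ * (τ b)⁻¹
      let τ' : W → Γ := fun w => if T'.Reachable w b then ρ * τ w else τ w
      have hab' : P a b ((τ' b)⁻¹ * τ' a) := by
        have h1 : τ' a = τ a := if_neg hbr
        have h2 : τ' b = ρ * τ b := if_pos (Reachable.refl b)
        have : (τ' b)⁻¹ * τ' a = s := by
          rw [h1, h2]
          simp [ρ]
        rwa [this]
      refine ⟨τ', fun u v huv => ?_⟩
      by_cases he : s(u, v) = s(a, b)
      · rcases Sym2.eq_iff.mp he with ⟨rfl, rfl⟩ | ⟨rfl, rfl⟩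
        · exact hab'
        · simpa using hP _ _ _ hab'
      · have huv' : T'.Adj u v := by
          rw [deleteEdges_adj]
          exact ⟨huv, he⟩
        have hr : T'.Reachable u b ↔ T'.Reachable v b :=
          ⟨huv'.reachable.symm.trans, huv'.reachable.trans⟩
        have : (τ' v)⁻¹ * τ' u = (τ v)⁻¹ * τ u := by
          simp only [τ', hr]
          split_ifs <;> group
        rw [this]
        exact hτ u v huv'
    · push Not at hne
      exact ⟨1, fun u v h => (hne u v h).elim⟩

end Gauge

section Cover

variable {V : Type*} {G : SimpleGraph V} {m : ℕ}

/-- The proper `C`-colorings of `G` with the vertex `v₀` deleted in which no neighbor `u` of `v₀`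
receives the color `x u`. -/
def AvoidingColoring (G : SimpleGraph V) (v₀ : V) {C : Type*} (x : {u // u ≠ v₀} → C) : Type _ :=
  {g : {u // u ≠ v₀} → C //
    (∀ u v, G.Adj u.1 v.1 → g u ≠ g v) ∧ ∀ u, G.Adj v₀ u.1 → g u ≠ x u}

instance [Finite V] (v₀ : V) {C : Type*} [Finite C] (x : {u // u ≠ v₀} → C) :
    Finite (AvoidingColoring G v₀ x) := by
  unfold AvoidingColoring
  infer_instance

theorem exists_polynomial_card_avoidingColoring [Finite V] (G : SimpleGraph V) (v₀ : V)
    (r : Setoid {u // u ≠ v₀}) :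
    ∃ p : ℤ[X], ∀ m : ℕ, ∀ x : {u // u ≠ v₀} → Fin m, Setoid.ker x = r →
      (Nat.card (AvoidingColoring G v₀ x) : ℤ) = p.eval (m : ℤ) :=
  exists_polynomial_card_extension (X := {u // u ≠ v₀}) (W := {u // u ≠ v₀})
    (fun s => (∀ u v, G.Adj u.1 v.1 → ¬ s (Sum.inr u) (Sum.inr v)) ∧
      ∀ u : {u // u ≠ v₀}, G.Adj v₀ u.1 → ¬ s (Sum.inr u) (Sum.inl u)) r

/-- A cover of `G` can be relabelled so that its matchings away from `v₀` become trivial. -/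
theorem IsDPCover.exists_relabelling [Finite V] {H : SimpleGraph (V × Fin m)}
    (hH : IsDPCover G m H) {v₀ : V}
    (hv₀ : (SimpleGraph.induce {u : V | u ≠ v₀} G).IsAcyclic) :
    ∃ τ : {u // u ≠ v₀} → Equiv.Perm (Fin m), ∀ u v j j', G.Adj u.1 v.1 →
      H.Adj (u.1, j) (v.1, j') → τ u j = τ v j' := by
  obtain ⟨τ, hτ⟩ := hv₀.exists_potential
    (fun u v (s : Equiv.Perm (Fin m)) => ∀ j j', H.Adj (u.1, j) (v.1, j') → s j = j')
    (fun u v s h j j' hj => by rw [← h j' j hj.symm]; exact s.symm_apply_apply j')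
    (fun u v huv => by
      have huv' : u.1 ≠ v.1 := G.ne_of_adj huv
      let D : Set (Fin m) := {j | ∃ j', H.Adj (u.1, j) (v.1, j')}
      have hD : ∀ j, ∃ j', j ∈ D → H.Adj (u.1, j) (v.1, j') := fun j => by
        by_cases hj : j ∈ D
        · obtain ⟨j', h⟩ := hj
          exact ⟨j', fun _ => h⟩
        · exact ⟨j, fun h => (hj h).elim⟩
      choose f hf using hD
      obtain ⟨e, he⟩ := Equiv.Perm.exists_extend D f fun a ha b hb hab =>
        hH.matching₂ _ _ _ _ _ huv' (hf a ha) (hab ▸ hf b hb)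
      refine ⟨e, fun j j' h => ?_⟩
      rw [he j ⟨j', h⟩]
      exact hH.matching₁ _ _ _ _ _ huv' (hf j ⟨j', h⟩) h)
  refine ⟨τ, fun u v j j' huv h => ?_⟩
  have := hτ u v huv j j' h
  rw [Equiv.Perm.mul_apply, Equiv.Perm.inv_eq_iff_eq] at this
  exact this

theorem IsDPCover.le_coverColorings [Finite V] {H : SimpleGraph (V × Fin m)}
    (hH : IsDPCover G m H) {v₀ : V}
    (hv₀ : (SimpleGraph.induce {u : V | u ≠ v₀} G).IsAcyclic) {k : ℕ}
    (hk : ∀ x : {u // u ≠ v₀} → Fin m, k ≤ Nat.card (AvoidingColoring G v₀ x)) :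
    m * k ≤ coverColorings m H := by
  classical
  obtain ⟨τ, hτ⟩ := hH.exists_relabelling hv₀
  have hx : ∀ (c : Fin m) (u : {u // u ≠ v₀}), ∃ d, ∀ j, H.Adj (v₀, c) (u.1, j) → τ u j = d := by
    intro c u
    by_cases h : ∃ j, H.Adj (v₀, c) (u.1, j)
    · obtain ⟨j, hj⟩ := h
      exact ⟨τ u j, fun j' hj' => by rw [hH.matching₁ _ _ _ _ _ u.2.symm hj hj']⟩
    · exact ⟨c, fun j hj => (h ⟨j, hj⟩).elim⟩
  choose x hx using hx
  let F : (Σ c, AvoidingColoring G v₀ (x c)) → V → Fin m := fun z =>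
    (Equiv.funSplitAt v₀ (Fin m)).symm (z.1, fun u => (τ u).symm (z.2.1 u))
  have hF₀ : ∀ z, F z v₀ = z.1 := fun z => by simp [F]
  have hF : ∀ z (u : {u // u ≠ v₀}), τ u (F z u.1) = z.2.1 u := fun z u => by simp [F, u.2]
  have hcol : ∀ z u v, ¬ H.Adj (u, F z u) (v, F z v) := by
    have key : ∀ z (v : {u // u ≠ v₀}), ¬ H.Adj (v₀, F z v₀) (v.1, F z v.1) := fun z v h => by
      have h' := hx _ _ _ (hF₀ z ▸ h)
      rw [hF] at h'
      exact z.2.2.2 v (hH.cross _ _ _ _ v.2.symm h) h'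
    intro z u v h
    by_cases huv : u = v
    · subst huv
      exact H.irrefl h
    by_cases hu : u = v₀
    · subst hu
      exact key z ⟨v, Ne.symm huv⟩ h
    by_cases hv : v = v₀
    · subst hv
      exact key z ⟨u, huv⟩ h.symm
    · have hadj := hH.cross _ _ _ _ huv h
      have h' := hτ ⟨u, hu⟩ ⟨v, hv⟩ _ _ hadj h
      rw [hF z ⟨u, hu⟩, hF z ⟨v, hv⟩] at h'
      exact z.2.2.1 _ _ hadj h'
  calc m * k = ∑ _c : Fin m, k := by simp
    _ ≤ ∑ c, Nat.card (AvoidingColoring G v₀ (x c)) := Finset.sum_le_sum fun c _ => hk (x c)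
    _ = Nat.card (Σ c, AvoidingColoring G v₀ (x c)) := Nat.card_sigma.symm
    _ ≤ coverColorings m H := by
      refine Nat.card_le_card_of_injective (fun z => ⟨F z, hcol z⟩) ?_
      rintro ⟨c, g⟩ ⟨c', g'⟩ h
      have h : F ⟨c, g⟩ = F ⟨c', g'⟩ := congrArg Subtype.val h
      obtain rfl : c = c' := (hF₀ ⟨c, g⟩).symm.trans (h ▸ hF₀ ⟨c', g'⟩)
      obtain rfl : g = g' := Subtype.ext <| funext fun u => by
        rw [← hF ⟨c, g⟩ u, h, hF]
      rfl

/-- The cover of `G` which joins color `c` of `v₀` to color `c + b u` of each neighbor `u` of `v₀`,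
and joins equal colors across the edges away from `v₀`. -/
theorem exists_shiftCover [Finite V] [NeZero m] (G : SimpleGraph V) (v₀ : V)
    (b : {u // u ≠ v₀} → Fin m) :
    ∃ H : SimpleGraph (V × Fin m), IsDPCover G m H ∧
      coverColorings m H ≤ m * Nat.card (AvoidingColoring G v₀ b) := by
  classical
  let B : V → V → Fin m := fun u v => if u = v₀ then if h : v ≠ v₀ then b ⟨v, h⟩ else 0 else 0
  let H : SimpleGraph (V × Fin m) :=
    { Adj := fun p q => (p.1 = q.1 ∧ p.2 ≠ q.2) ∨
        (G.Adj p.1 q.1 ∧ p.2 + B p.1 q.1 = q.2 + B q.1 p.1)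
      symm := ⟨fun p q h => h.imp (fun h => ⟨h.1.symm, h.2.symm⟩) fun h => ⟨h.1.symm, h.2.symm⟩⟩
      loopless := ⟨fun p h => h.elim (fun h => h.2 rfl) fun h => G.irrefl h.1⟩ }
  have hadj : ∀ {u v j j'}, u ≠ v → H.Adj (u, j) (v, j') →
      G.Adj u v ∧ j + B u v = j' + B v u := fun huv h => h.resolve_left fun h => huv h.1
  refine ⟨H, ⟨fun v j j' h => .inl ⟨rfl, h⟩, fun u v j j' huv h => (hadj huv h).1,
    fun u v j j₁ j₂ huv h₁ h₂ => add_right_cancel ((hadj huv h₁).2.symm.trans (hadj huv h₂).2),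
    fun u v j₁ j₂ j huv h₁ h₂ => add_right_cancel ((hadj huv h₁).2.trans (hadj huv h₂).2.symm)⟩, ?_⟩
  let F : {f : V → Fin m // ∀ u v, ¬ H.Adj (u, f u) (v, f v)} →
      Fin m × AvoidingColoring G v₀ b := fun f =>
    (f.1 v₀, ⟨fun u => f.1 u.1 - f.1 v₀, fun u v huv h => f.2 u.1 v.1 (.inr ⟨huv, by
        simpa [B, u.2, v.2] using h⟩), fun u hu h => f.2 v₀ u.1 (.inr ⟨hu, by
        simp [B, u.2, ← h]⟩)⟩)
  have hF : Function.Injective F := by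
    intro f f' h
    have h₀ : f.1 v₀ = f'.1 v₀ := congrArg Prod.fst h
    have h₁ : ∀ u : {u // u ≠ v₀}, f.1 u.1 - f.1 v₀ = f'.1 u.1 - f'.1 v₀ :=
      fun u => congrFun (congrArg Subtype.val (congrArg Prod.snd h)) u
    refine Subtype.ext (funext fun u => ?_)
    by_cases hu : u = v₀
    · rw [hu, h₀]
    · simpa [h₀] using h₁ ⟨u, hu⟩
  simpa [coverColorings, Nat.card_prod] using Nat.card_le_card_of_injective F hF

theorem dpColorFunction_eq_mul_card_avoidingColoring [Finite V] [NeZero m] {v₀ : V}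
    (hv₀ : (SimpleGraph.induce {u : V | u ≠ v₀} G).IsAcyclic) (b : {u // u ≠ v₀} → Fin m)
    (hb : ∀ x : {u // u ≠ v₀} → Fin m,
      Nat.card (AvoidingColoring G v₀ b) ≤ Nat.card (AvoidingColoring G v₀ x)) :
    dpColorFunction G m = m * Nat.card (AvoidingColoring G v₀ b) := by
  obtain ⟨H, hH, hle⟩ := exists_shiftCover G v₀ b
  have hH' : dpColorFunction G m ≤ coverColorings m H := Nat.sInf_le ⟨H, hH, rfl⟩
  refine le_antisymm (hH'.trans hle) ?_
  unfold dpColorFunction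
  refine le_csInf ⟨_, H, hH, rfl⟩ ?_
  rintro _ ⟨H', hH', rfl⟩
  exact hH'.le_coverColorings hv₀ hb

end Cover

/-- Theorem 1.5: if `G` has a feedback vertex set of size one, then its DP color
function eventually agrees with a polynomial. -/
theorem stmt_15 {V : Type*} [Fintype V] (G : SimpleGraph V)
    (v₀ : V) (hv₀ : (SimpleGraph.induce {u : V | u ≠ v₀} G).IsAcyclic) :
    ∃ (N : ℕ) (p : Polynomial ℤ), ∀ m : ℕ, N ≤ m →
      (dpColorFunction G m : ℤ) = p.eval (m : ℤ) := by
  choose p hp using exists_polynomial_card_avoidingColoring G v₀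
  obtain ⟨r, hr⟩ := Polynomial.exists_eventually_le p
  obtain ⟨N, hN⟩ := Filter.eventually_atTop.mp hr
  refine ⟨max N (max 1 (Nat.card (Quotient r))), X * p r, fun m hm => ?_⟩
  simp only [max_le_iff] at hm
  have : NeZero m := ⟨by lia⟩
  let b : {u // u ≠ v₀} → Fin m := fun u =>
    Fin.castLE hm.2.2 (Finite.equivFin (Quotient r) ⟦u⟧)
  have hb : Setoid.ker b = r := by
    ext u v
    rw [Setoid.ker_def, (Fin.castLE_injective hm.2.2).eq_iff, EmbeddingLike.apply_eq_iff_eq,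
      Quotient.eq]
  rw [dpColorFunction_eq_mul_card_avoidingColoring hv₀ b fun x => ?_, Nat.cast_mul, hp r m b hb,
    eval_mul, eval_X]
  have := hN m hm.1 (Setoid.ker x)
  rw [← hp r m b hb, ← hp _ m x rfl] at this
  exact_mod_cast this
end

section
/- Let G = Θ(l₁,…,l_k) be a generalized theta graph with k ≥ 2 internally disjoint paths of lengths l₁,…,l_k between two end vertices, where l₂ ≤ ⋯ ≤ l_k and l₂ ≥ max{l₁, 2}. If there exists j ∈ {2,…,k} such that l₁ and l_j have the same parity, then there is N ∈ ℕ such that P_DP(G, m) < P(G, m) for all m ≥ N. -/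
/-- Vertex type of the generalized theta graph: two end vertices plus, for
each path `i`, `l i - 1` internal vertices. -/
abbrev ThetaVertexType (k : ℕ) (l : Fin k → ℕ) : Type :=
  Fin 2 ⊕ (Σ i : Fin k, Fin (l i - 1))

/-- The `j`-th vertex along the `i`-th path of the generalized theta graph
(`j = 0` is the end vertex `u`, `j = l i` is the end vertex `w`). -/
def thetaVert (k : ℕ) (l : Fin k → ℕ) (i : Fin k) (j : ℕ) : ThetaVertexType k l :=
  if hj : j = 0 then Sum.inl 0
  else if h : j < l i then Sum.inr ⟨i, ⟨j - 1, by omega⟩⟩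
  else Sum.inl 1

/-- The generalized theta graph `Θ(l 0, …, l (k-1))`: two end vertices joined by
`k` internally disjoint paths, the `i`-th of which has `l i` edges. -/
def thetaGraph (k : ℕ) (l : Fin k → ℕ) : SimpleGraph (ThetaVertexType k l) :=
  SimpleGraph.fromEdgeSet
    {e | ∃ (i : Fin k) (j : ℕ), j < l i ∧ e = s(thetaVert k l i j, thetaVert k l i (j + 1))}

/-- Number of proper colorings of `G` with `m` colors. -/
noncomputable def properCount {V : Type*} (G : SimpleGraph V) (m : ℕ) : ℕ :=
  Nat.card {f : V → Fin m // ∀ u v : V, G.Adj u v → f u ≠ f v}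


/-! ### Walks in a complete graph -/

/-- The sequence `a, g 0, …, g (n - 1), b, b, …`. -/
def walkSeq {α : Type*} {n : ℕ} (a : α) (g : Fin n → α) (b : α) (t : ℕ) : α :=
  if t = 0 then a else if h : t - 1 < n then g ⟨t - 1, h⟩ else b

/-- The inner vertices `g` make `a, g 0, …, g (n - 1), b` a walk in the complete graph. -/
def IsWalk {α : Type*} {n : ℕ} (a : α) (g : Fin n → α) (b : α) : Prop :=
  ∀ t < n + 1, walkSeq a g b t ≠ walkSeq a g b (t + 1)

lemma walkSeq_cons_succ {α : Type*} {n : ℕ} (a c : α) (g : Fin n → α) (b : α) (t : ℕ) :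
    walkSeq a (Fin.cons c g : Fin (n + 1) → α) b (t + 1) = walkSeq c g b t := by
  rcases t with _ | t
  · simp [walkSeq]
  · by_cases h : t < n
    · simp [walkSeq, h]
      rfl
    · simp [walkSeq, h]

lemma isWalk_cons {α : Type*} {n : ℕ} (a c : α) (g : Fin n → α) (b : α) :
    IsWalk a (Fin.cons c g : Fin (n + 1) → α) b ↔ c ≠ a ∧ IsWalk c g b := by
  have h0 : walkSeq a (Fin.cons c g : Fin (n + 1) → α) b 0 = a := by simp [walkSeq]
  have h1 : walkSeq c g b 0 = c := by simp [walkSeq]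
  constructor
  · intro h
    refine ⟨fun e => h 0 (by omega) ?_, fun t ht => ?_⟩
    · rw [walkSeq_cons_succ, h0, h1, e]
    · simpa only [walkSeq_cons_succ] using h (t + 1) (by omega)
  · rintro ⟨hc, h⟩ t ht
    rcases t with _ | t
    · rw [walkSeq_cons_succ, h0, h1]
      exact hc.symm
    · simpa only [walkSeq_cons_succ] using h t (by omega)

/-- The number of walks with `n` inner vertices between two distinct vertices of the complete
graph on `m` vertices. -/
def walkCount (m : ℕ) : ℕ → ℤ
  | 0 => 1
  | n + 1 => (m - 1) * walkCount m n + (-1) ^ (n + 1)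

/-- Splitting off the first inner vertex of a walk. -/
def walkConsEquiv {α : Type*} (n : ℕ) (a b : α) :
    {g : Fin (n + 1) → α // IsWalk a g b} ≃
      Σ c : {c : α // c ≠ a}, {g : Fin n → α // IsWalk c.1 g b} where
  toFun g :=
    have h : g.1 0 ≠ a ∧ IsWalk (g.1 0) (Fin.tail g.1) b := by
      rw [← isWalk_cons, Fin.cons_self_tail]
      exact g.2
    ⟨⟨g.1 0, h.1⟩, ⟨Fin.tail g.1, h.2⟩⟩
  invFun x := ⟨Fin.cons x.1.1 x.2.1, (isWalk_cons _ _ _ _).2 ⟨x.1.2, x.2.2⟩⟩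
  left_inv g := by simp
  right_inv x := by
    rcases x with ⟨⟨c, hc⟩, ⟨g, hg⟩⟩
    rfl

lemma card_isWalk (m n : ℕ) (a b : Fin m) :
    (Nat.card {g : Fin n → Fin m // IsWalk a g b} : ℤ) =
      walkCount m n + if a = b then (-1) ^ (n + 1) else 0 := by
  classical
  induction n generalizing a with
  | zero =>
    have h (g : Fin 0 → Fin m) : IsWalk a g b ↔ a ≠ b := by
      simp [IsWalk, walkSeq]
    rw [Nat.card_congr (Equiv.subtypeEquivRight h)]
    by_cases hab : a = b <;> simp [hab, walkCount]
  | succ n ih =>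
    rw [Nat.card_congr (walkConsEquiv n a b), Nat.card_sigma]
    push_cast
    simp only [ih]
    have h := Finset.sum_subtype (Finset.univ.erase a) (p := fun c => c ≠ a) (F := inferInstance)
      (by simp)
      (fun c => walkCount m n + if c = b then (-1) ^ (n + 1) else 0)
    rw [← h, Finset.sum_erase_eq_sub (Finset.mem_univ a), Finset.sum_add_distrib]
    simp [walkCount]
    split_ifs <;> ring

lemma one_le_walkCount {m : ℕ} (hm : 3 ≤ m) (n : ℕ) : 1 ≤ walkCount m n := by
  have hm' : (3 : ℤ) ≤ m := by exact_mod_cast hm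
  induction n with
  | zero => simp [walkCount]
  | succ n ih =>
    rw [walkCount]
    rcases neg_one_pow_eq_or ℤ (n + 1) with h | h <;> rw [h] <;> nlinarith

lemma mul_walkCount_le {m : ℕ} (hm : 3 ≤ m) {n n' : ℕ} (h : n < n') :
    (m - 2) * walkCount m n ≤ walkCount m n' := by
  have hm' : (3 : ℤ) ≤ m := by exact_mod_cast hm
  have step (q : ℕ) : (m - 2) * walkCount m q ≤ walkCount m (q + 1) := by
    have := one_le_walkCount hm q
    rw [walkCount]
    rcases neg_one_pow_eq_or ℤ (q + 1) with h | h <;> rw [h] <;> nlinarith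
  have mono : Monotone (walkCount m) := monotone_nat_of_le_succ fun q => by
    nlinarith [step q, one_le_walkCount hm q]
  exact (step n).trans (mono h)

/-! ### Inequalities between products -/

lemma mul_prod_sub_one_ge {ι : Type*} (s : Finset ι) (p : ι → ℤ) (D : ℤ)
    (hp : ∀ i ∈ s, 1 ≤ p i) (hD : ∀ i ∈ s, D ≤ p i) :
    (D - s.card) * ∏ i ∈ s, p i ≤ D * ∏ i ∈ s, (p i - 1) := by
  classical
  induction s using Finset.induction_on with
  | empty => simp
  | insert a s ha ih =>
    rw [Finset.prod_insert ha, Finset.prod_insert ha, Finset.card_insert_of_notMem ha]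
    have h := ih (fun i hi => hp i (Finset.mem_insert_of_mem hi))
      fun i hi => hD i (Finset.mem_insert_of_mem hi)
    have h1 := hp a (Finset.mem_insert_self a s)
    have h2 := hD a (Finset.mem_insert_self a s)
    have h3 : 0 ≤ ∏ i ∈ s, p i := Finset.prod_nonneg fun i hi => by
      linarith [hp i (Finset.mem_insert_of_mem hi)]
    have h4 := mul_le_mul_of_nonneg_right h (sub_nonneg.2 h1)
    have h5 : 0 ≤ (p a - D + s.card) * ∏ i ∈ s, p i :=
      mul_nonneg (by have : (0 : ℤ) ≤ s.card := by positivity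
                     linarith) h3
    push_cast
    linarith

lemma mul_prod_lt_mul_prod_sub_one {ι : Type*} (s : Finset ι) (p : ι → ℤ) (c : ℤ) (hc : 0 ≤ c)
    (hp : ∀ i ∈ s, s.card * (c + 1) + 1 ≤ p i) :
    c * ∏ i ∈ s, p i < (c + 1) * ∏ i ∈ s, (p i - 1) := by
  have hs : (0 : ℤ) ≤ s.card := by positivity
  have h0 : 0 ≤ s.card * (c + 1) := by positivity
  have h1 (i) (hi : i ∈ s) : 1 ≤ p i := by linarith [hp i hi]
  have h2 := mul_prod_sub_one_ge s p _ h1 hp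
  have h3 : 0 < ∏ i ∈ s, p i := Finset.prod_pos fun i hi => by linarith [h1 i hi]
  have h4 := mul_le_mul_of_nonneg_left h2 (show 0 ≤ c + 1 by linarith)
  refine lt_of_mul_lt_mul_left (a := s.card * (c + 1) + 1) ?_ (by linarith)
  linarith

/-- If `y i` is large for all `i` with `ε i ≠ ε o`, then the sign of `∏ (y i + ε i) - ∏ y i`
is `ε o`. -/
lemma prod_add_sign_sub_prod_pos {ι : Type*} [DecidableEq ι] (s : Finset ι) (y ε : ι → ℤ)
    (o : ι) (ho : o ∈ s)
    (hε : ∀ i ∈ s, ε i = 1 ∨ ε i = -1) (hy : ∀ i ∈ s, 1 ≤ y i)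
    (hbig : ∀ i ∈ s, ε i ≠ ε o → s.card * (y o + 1) + 1 ≤ y i) :
    0 < ε o * (∏ i ∈ s, (y i + ε i) - ∏ i ∈ s, y i) := by
  set S := (s.erase o).filter fun i => ε i = ε o
  set T := (s.erase o).filter fun i => ¬ ε i = ε o
  have hS (i) (hi : i ∈ S) : i ∈ s ∧ ε i = ε o := by
    simp only [S, Finset.mem_filter, Finset.mem_erase] at hi
    exact ⟨hi.1.2, hi.2⟩
  have hT (i) (hi : i ∈ T) : i ∈ s ∧ ε i ≠ ε o := by
    simp only [T, Finset.mem_filter, Finset.mem_erase] at hi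
    exact ⟨hi.1.2, hi.2⟩
  have split (f : ι → ℤ) : ∏ i ∈ s, f i = f o * ((∏ i ∈ S, f i) * ∏ i ∈ T, f i) := by
    rw [← Finset.mul_prod_erase s f ho, Finset.prod_filter_mul_prod_filter_not]
  have hcard : (T.card : ℤ) ≤ s.card := by
    exact_mod_cast Finset.card_le_card fun i hi => (hT i hi).1
  have hyo := hy o ho
  have hSpos : 0 < ∏ i ∈ S, y i := Finset.prod_pos fun i hi => by linarith [hy i (hS i hi).1]
  have hTle (i) (hi : i ∈ T) : T.card * (y o + 1) + 1 ≤ y i := by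
    have := hbig i (hT i hi).1 (hT i hi).2
    nlinarith
  rw [split, split]
  rcases hε o ho with h | h
  · have eT : ∏ i ∈ T, (y i + ε i) = ∏ i ∈ T, (y i - 1) := Finset.prod_congr rfl fun i hi => by
      rcases hε i (hT i hi).1 with h' | h'
      · exact absurd (h'.trans h.symm) (hT i hi).2
      · rw [h']; ring
    have leS : ∏ i ∈ S, y i ≤ ∏ i ∈ S, (y i + ε i) :=
      Finset.prod_le_prod (fun i hi => by linarith [hy i (hS i hi).1])
        fun i hi => by rw [(hS i hi).2, h]; linarith
    have key := mul_prod_lt_mul_prod_sub_one T y (y o) (by linarith) hTle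
    have hTnn : 0 ≤ ∏ i ∈ T, (y i - 1) := Finset.prod_nonneg fun i hi => by
      linarith [hy i (hT i hi).1]
    rw [eT, h]
    have k1 := mul_lt_mul_of_pos_left key hSpos
    have k2 := mul_le_mul_of_nonneg_right leS
      (mul_nonneg (show 0 ≤ y o + 1 by linarith) hTnn)
    linarith
  · have eT : ∏ i ∈ T, (y i + ε i) = ∏ i ∈ T, (y i + 1) := Finset.prod_congr rfl fun i hi => by
      rcases hε i (hT i hi).1 with h' | h'
      · rw [h']
      · exact absurd (h'.trans h.symm) (hT i hi).2
    have leS : ∏ i ∈ S, (y i + ε i) ≤ ∏ i ∈ S, y i :=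
      Finset.prod_le_prod (fun i hi => by rw [(hS i hi).2, h]; linarith [hy i (hS i hi).1])
        fun i hi => by rw [(hS i hi).2, h]; linarith
    have key := mul_prod_lt_mul_prod_sub_one T (fun i => y i + 1) (y o - 1) (by linarith)
      fun i hi => by
        have : (0 : ℤ) ≤ T.card := by positivity
        have := hTle i hi
        simp only [sub_add_cancel]
        linarith
    simp only [add_sub_cancel_right, sub_add_cancel] at key
    have hTnn : 0 ≤ ∏ i ∈ T, (y i + 1) := Finset.prod_nonneg fun i hi => by
      linarith [hy i (hT i hi).1]
    rw [eT, h]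
    have k1 := mul_lt_mul_of_pos_left key hSpos
    have k2 := mul_le_mul_of_nonneg_right leS
      (mul_nonneg (show 0 ≤ y o - 1 by linarith) hTnn)
    linarith

/-! ### Covers given by permutations on the edges -/

/-- The cover of `G` in which the lists of adjacent `u` and `v` are matched by `T u v`. -/
def permCover {V : Type*} (G : SimpleGraph V) {m : ℕ} (T : V → V → Equiv.Perm (Fin m))
    (hT : ∀ u v, T v u = (T u v)⁻¹) : SimpleGraph (V × Fin m) where
  Adj x y := (x.1 = y.1 ∧ x.2 ≠ y.2) ∨ (G.Adj x.1 y.1 ∧ x.2 = T x.1 y.1 y.2)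
  symm := ⟨by
    rintro x y (⟨h, h'⟩ | ⟨h, h'⟩)
    · exact Or.inl ⟨h.symm, h'.symm⟩
    · refine Or.inr ⟨h.symm, ?_⟩
      rw [hT x.1 y.1, h']
      simp⟩
  loopless := ⟨by
    rintro x (⟨-, h⟩ | ⟨h, -⟩)
    · exact h rfl
    · exact G.irrefl h⟩

lemma isDPCover_permCover {V : Type*} (G : SimpleGraph V) {m : ℕ}
    (T : V → V → Equiv.Perm (Fin m)) (hT : ∀ u v, T v u = (T u v)⁻¹) :
    IsDPCover G m (permCover G T hT) where
  listClique v a b hab := Or.inl ⟨rfl, hab⟩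
  cross u v a b huv h := by
    rcases h with ⟨h, -⟩ | ⟨h, -⟩
    · exact absurd h huv
    · exact h
  matching₁ u v a b c huv h h' := by
    rcases h with ⟨h, -⟩ | ⟨-, h⟩
    · exact absurd h huv
    rcases h' with ⟨h', -⟩ | ⟨-, h'⟩
    · exact absurd h' huv
    exact (T u v).injective (h.symm.trans h')
  matching₂ u v a b c huv h h' := by
    rcases h with ⟨h, -⟩ | ⟨-, h⟩
    · exact absurd h huv
    rcases h' with ⟨h', -⟩ | ⟨-, h'⟩
    · exact absurd h' huv
    exact h.trans h'.symm

lemma dpColorFunction_le_permCover {V : Type*} (G : SimpleGraph V) {m : ℕ}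
    (T : V → V → Equiv.Perm (Fin m)) (hT : ∀ u v, T v u = (T u v)⁻¹) :
    dpColorFunction G m ≤
      Nat.card {f : V → Fin m // ∀ u v, G.Adj u v → f u ≠ T u v (f v)} := by
  refine Nat.sInf_le ⟨permCover G T hT, isDPCover_permCover G T hT, ?_⟩
  refine Nat.card_congr (Equiv.subtypeEquivRight fun f => ?_)
  refine forall₂_congr fun u v => ?_
  constructor
  · rintro h (⟨e, h'⟩ | ⟨e, h'⟩)
    · exact h' (congrArg f e)
    · exact h e h'
  · intro h e h'
    exact h (Or.inr ⟨e, h'⟩)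

/-! ### Twisted colorings of theta graphs -/

section Theta

variable {k : ℕ} {l : Fin k → ℕ}

lemma thetaVert_ne_succ {i : Fin k} {t : ℕ} (ht : t < l i) :
    thetaVert k l i t ≠ thetaVert k l i (t + 1) := by
  unfold thetaVert
  split_ifs <;> simp <;> omega

lemma thetaGraph_adj_iff {u v : ThetaVertexType k l} :
    (thetaGraph k l).Adj u v ↔ ∃ (i : Fin k) (t : ℕ), t < l i ∧
      ((u = thetaVert k l i t ∧ v = thetaVert k l i (t + 1)) ∨
        (v = thetaVert k l i t ∧ u = thetaVert k l i (t + 1))) := by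
  simp only [thetaGraph, SimpleGraph.fromEdgeSet_adj, Set.mem_ofPred_eq, Sym2.eq_iff]
  constructor
  · rintro ⟨⟨i, t, ht, h⟩, -⟩
    exact ⟨i, t, ht, h.imp id And.symm⟩
  · rintro ⟨i, t, ht, h⟩
    refine ⟨⟨i, t, ht, h.imp id And.symm⟩, ?_⟩
    rcases h with ⟨rfl, rfl⟩ | ⟨rfl, rfl⟩
    · exact thetaVert_ne_succ ht
    · exact (thetaVert_ne_succ ht).symm

lemma apply_thetaVert {α : Type*} (f : ThetaVertexType k l → α) (i : Fin k) {t : ℕ}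
    (hl : 1 ≤ l i) :
    f (thetaVert k l i t) =
      walkSeq (f (Sum.inl 0)) (fun q => f (Sum.inr ⟨i, q⟩)) (f (Sum.inl 1)) t := by
  unfold thetaVert walkSeq
  split_ifs <;> first | rfl | omega

/-- The permutations which twist the last edge of path `j` by `σ` and nothing else. -/
def lastEdgeTwist {α : Type*} (j : Fin k) (σ : Equiv.Perm α) :
    ThetaVertexType k l → ThetaVertexType k l → Equiv.Perm α
  | .inr x, .inl e => if x.1 = j ∧ e = 1 then σ else 1
  | .inl e, .inr x => if x.1 = j ∧ e = 1 then σ⁻¹ else 1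
  | _, _ => 1

lemma lastEdgeTwist_inv {α : Type*} (j : Fin k) (σ : Equiv.Perm α)
    (u v : ThetaVertexType k l) :
    lastEdgeTwist j σ v u = (lastEdgeTwist j σ u v)⁻¹ := by
  rcases u with u | u <;> rcases v with v | v <;> simp only [lastEdgeTwist, inv_one] <;>
    split_ifs <;> simp

lemma lastEdgeTwist_thetaVert {α : Type*} (j : Fin k) (σ : Equiv.Perm α) (hj : 2 ≤ l j)
    (f : ThetaVertexType k l → α) {i : Fin k} {t : ℕ} (ht : t < l i) :
    lastEdgeTwist j σ (thetaVert k l i t) (thetaVert k l i (t + 1)) (f (thetaVert k l i (t + 1)))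
      = walkSeq (f (Sum.inl 0)) (fun q => f (Sum.inr ⟨i, q⟩))
          ((if i = j then σ else 1) (f (Sum.inl 1))) (t + 1) := by
  by_cases h1 : t + 1 < l i
  · have h2 : t < l i - 1 := by omega
    by_cases h0 : t = 0
    · subst h0
      simp [thetaVert, lastEdgeTwist, walkSeq, h1, h2]
    · simp [thetaVert, lastEdgeTwist, walkSeq, h1, h2, h0, ht]
  · have h2 : ¬ t < l i - 1 := by omega
    by_cases h0 : t = 0
    · have : i ≠ j := by rintro rfl; omega
      subst h0
      have h1' : ¬ 1 < l i := h1
      simp [thetaVert, lastEdgeTwist, walkSeq, h1', this]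
    · simp [thetaVert, lastEdgeTwist, walkSeq, h1, h2, h0, ht]

lemma forall_adj_lastEdgeTwist_iff {m : ℕ} (j : Fin k) (σ : Equiv.Perm (Fin m)) (hj : 2 ≤ l j)
    (hl : ∀ i, 1 ≤ l i) (f : ThetaVertexType k l → Fin m) :
    (∀ u v, (thetaGraph k l).Adj u v → f u ≠ lastEdgeTwist j σ u v (f v)) ↔
      ∀ i, IsWalk (f (Sum.inl 0)) (fun q => f (Sum.inr ⟨i, q⟩))
        ((if i = j then σ else 1) (f (Sum.inl 1))) := by
  have start {i : Fin k} {t : ℕ} (ht : t < l i) (b : Fin m) : f (thetaVert k l i t) =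
      walkSeq (f (Sum.inl 0)) (fun q => f (Sum.inr ⟨i, q⟩)) b t := by
    rw [apply_thetaVert f i (hl i)]
    unfold walkSeq
    split_ifs <;> first | rfl | omega
  constructor
  · intro h i t ht
    have ht' : t < l i := by have := hl i; omega
    rw [← lastEdgeTwist_thetaVert j σ hj f ht', ← start ht']
    exact h _ _ (thetaGraph_adj_iff.2 ⟨i, t, ht', Or.inl ⟨rfl, rfl⟩⟩)
  · intro h u v huv
    obtain ⟨i, t, ht, huv⟩ := thetaGraph_adj_iff.1 huv
    have key := h i t (by omega)
    rw [← lastEdgeTwist_thetaVert j σ hj f ht, ← start ht] at key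
    rcases huv with ⟨rfl, rfl⟩ | ⟨rfl, rfl⟩
    · exact key
    · intro e
      apply key
      rw [lastEdgeTwist_inv, e]
      simp

/-- A vertex labelling of a theta graph consists of the labels of the two ends and labellings
of the insides of the paths. -/
def thetaWalksEquiv {α : Type*} (τ : Fin k → Equiv.Perm α) :
    {f : ThetaVertexType k l → α // ∀ i, IsWalk (f (Sum.inl 0)) (fun q => f (Sum.inr ⟨i, q⟩))
        (τ i (f (Sum.inl 1)))} ≃
      Σ ab : α × α, ∀ i, {g : Fin (l i - 1) → α // IsWalk ab.1 g (τ i ab.2)} where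
  toFun f := ⟨(f.1 (Sum.inl 0), f.1 (Sum.inl 1)), fun i => ⟨fun q => f.1 (Sum.inr ⟨i, q⟩), f.2 i⟩⟩
  invFun x := ⟨Sum.elim ![x.1.1, x.1.2] fun iq => (x.2 iq.1).1 iq.2, fun i => (x.2 i).2⟩
  left_inv f := by
    apply Subtype.ext
    funext v
    rcases v with e | v
    · fin_cases e <;> rfl
    · rfl
  right_inv x := rfl

lemma card_lastEdgeTwist_colorings {m : ℕ} (j : Fin k) (σ : Equiv.Perm (Fin m)) (hj : 2 ≤ l j)
    (hl : ∀ i, 1 ≤ l i) :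
    (Nat.card {f : ThetaVertexType k l → Fin m //
        ∀ u v, (thetaGraph k l).Adj u v → f u ≠ lastEdgeTwist j σ u v (f v)} : ℤ) =
      ∑ a : Fin m, ∑ b : Fin m,
        (walkCount m (l j - 1) + if a = σ b then (-1) ^ l j else 0) *
          ∏ i ∈ Finset.univ.erase j, (walkCount m (l i - 1) + if a = b then (-1) ^ l i else 0) := by
  rw [Nat.card_congr ((Equiv.subtypeEquivRight (forall_adj_lastEdgeTwist_iff j σ hj hl)).trans
    (thetaWalksEquiv fun i => if i = j then σ else 1)), Nat.card_sigma]
  push_cast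
  rw [Fintype.sum_prod_type]
  refine Finset.sum_congr rfl fun a _ => Finset.sum_congr rfl fun b _ => ?_
  rw [Nat.card_pi, ← Finset.mul_prod_erase _ _ (Finset.mem_univ j)]
  push_cast
  congr 1
  · rw [card_isWalk, Nat.sub_add_cancel (hl j)]
    simp
  · refine Finset.prod_congr rfl fun i hi => ?_
    rw [card_isWalk, Nat.sub_add_cancel (hl i)]
    simp [Finset.ne_of_mem_erase hi]

lemma card_colorings_sub_card_lastEdgeTwist {m : ℕ} (j : Fin k) (σ : Equiv.Perm (Fin m))
    (hσ : ∀ a, σ a ≠ a) (hj : 2 ≤ l j) (hl : ∀ i, 1 ≤ l i) :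
    (properCount (thetaGraph k l) m : ℤ) -
      Nat.card {f : ThetaVertexType k l → Fin m //
        ∀ u v, (thetaGraph k l).Adj u v → f u ≠ lastEdgeTwist j σ u v (f v)} =
    m * ((-1) ^ l j * (∏ i ∈ Finset.univ.erase j, (walkCount m (l i - 1) + (-1) ^ l i) -
      ∏ i ∈ Finset.univ.erase j, walkCount m (l i - 1))) := by
  have h1 : properCount (thetaGraph k l) m = Nat.card {f : ThetaVertexType k l → Fin m //
      ∀ u v, (thetaGraph k l).Adj u v →
        f u ≠ lastEdgeTwist j (1 : Equiv.Perm (Fin m)) u v (f v)} := by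
    refine Nat.card_congr (Equiv.subtypeEquivRight fun f => forall₂_congr fun u v => ?_)
    have : lastEdgeTwist j (1 : Equiv.Perm (Fin m)) u v = 1 := by
      rcases u with u | u <;> rcases v with v | v <;> simp [lastEdgeTwist]
    rw [this, Equiv.Perm.one_apply]
  rw [h1, card_lastEdgeTwist_colorings j _ hj hl, card_lastEdgeTwist_colorings j _ hj hl]
  set A := ∏ i ∈ Finset.univ.erase j, (walkCount m (l i - 1) + (-1) ^ l i)
  set B := ∏ i ∈ Finset.univ.erase j, walkCount m (l i - 1)
  set y := walkCount m (l j - 1)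
  set ε : ℤ := (-1) ^ l j
  have hprod (a b : Fin m) : ∏ i ∈ Finset.univ.erase j,
      (walkCount m (l i - 1) + if a = b then (-1) ^ l i else 0) =
      B + if a = b then A - B else 0 := by
    split_ifs <;> simp [A, B]
  have hone (b : Fin m) : (1 : Equiv.Perm (Fin m)) b = b := rfl
  simp_rw [hprod, hone]
  have hterm (a b : Fin m) : (y + if a = b then ε else 0) * (B + if a = b then A - B else 0) =
      (y + if a = σ b then ε else 0) * (B + if a = b then A - B else 0) +
      ((if a = b then ε * A else 0) - if a = σ b then ε * B else 0) := by
    by_cases h : a = b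
    · subst h
      simp [(hσ a).symm]
      ring
    · simp only [h, if_false]
      split_ifs <;> ring
  simp only [hterm, Finset.sum_add_distrib, Finset.sum_sub_distrib]
  have hs : ∑ a : Fin m, ∑ b : Fin m, (if a = σ b then ε * B else 0) = m * (ε * B) := by
    rw [Finset.sum_comm]
    simp
  rw [hs]
  simp
  ring

end Theta

/-- Theorem 1.4(i): if some `l j` with `j ≥ 2` has the same parity as `l 1`,
then the DP color function of the generalized theta graph is eventually
strictly smaller than its chromatic polynomial. -/
theorem stmt_16 (k : ℕ) (hk : 2 ≤ k) (l : Fin k → ℕ)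
    (h1 : 1 ≤ l ⟨0, by omega⟩)
    (hmono : ∀ i j : Fin k, 1 ≤ i.val → i ≤ j → l i ≤ l j)
    (h2 : max (l ⟨0, by omega⟩) 2 ≤ l ⟨1, by omega⟩)
    (j : Fin k) (hj : 1 ≤ j.val)
    (hpar : l ⟨0, by omega⟩ % 2 = l j % 2) :
    ∃ N : ℕ, ∀ m : ℕ, N ≤ m →
      dpColorFunction (thetaGraph k l) m < properCount (thetaGraph k l) m := by
  have hl2 (i : Fin k) (hi : 1 ≤ i.val) : max (l ⟨0, by omega⟩) 2 ≤ l i :=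
    h2.trans (hmono ⟨1, by omega⟩ i le_rfl hi)
  have hl (i : Fin k) : 1 ≤ l i := by
    by_cases hi : 1 ≤ i.val
    · have := hl2 i hi
      omega
    · have : i = ⟨0, by omega⟩ := Fin.ext (by simpa using hi)
      rw [this]
      exact h1
  have hj2 : 2 ≤ l j := (le_max_right _ _).trans (hl2 j hj)
  refine ⟨2 * k + 3, fun m hm => ?_⟩
  obtain ⟨m, rfl⟩ : ∃ m', m = m' + 2 := ⟨m - 2, by omega⟩
  set σ : Equiv.Perm (Fin (m + 2)) := Equiv.addRight 1
  have hσ (a : Fin (m + 2)) : σ a ≠ a := by simp [σ]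
  have hdiff := card_colorings_sub_card_lastEdgeTwist j σ hσ hj2 hl
  have hm3 : 3 ≤ m + 2 := by omega
  have hε : ((-1 : ℤ) ^ l j) = (-1) ^ l ⟨0, by omega⟩ := by
    rw [neg_one_pow_eq_pow_mod_two, ← hpar, ← neg_one_pow_eq_pow_mod_two]
  have hpos := prod_add_sign_sub_prod_pos (Finset.univ.erase j)
    (fun i => walkCount (m + 2) (l i - 1)) (fun i => (-1) ^ l i) ⟨0, by omega⟩
    (by simp [Fin.ext_iff]; omega) (fun i _ => neg_one_pow_eq_or ℤ _)
    (fun i _ => one_le_walkCount hm3 _) (by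
      intro i _ hne
      have hi : 1 ≤ i.val := by
        by_contra h
        exact hne (by rw [show i = ⟨0, by omega⟩ from Fin.ext (by simpa using h)])
      have hlt : l ⟨0, by omega⟩ < l i :=
        lt_of_le_of_ne ((le_max_left _ _).trans (hl2 i hi)) fun h => hne (by rw [h])
      have hgrow := mul_walkCount_le hm3 (show l ⟨0, by omega⟩ - 1 < l i - 1 by omega)
      have hone := one_le_walkCount hm3 (l ⟨0, by omega⟩ - 1)
      have hcard : ((Finset.univ.erase j).card : ℤ) ≤ k := by
        exact_mod_cast (Finset.card_le_univ _).trans_eq (Fintype.card_fin k)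
      have hm' : (2 * k + 1 : ℤ) ≤ ((m + 2 : ℕ) : ℤ) - 2 := by
        push_cast
        linarith [(by exact_mod_cast hm : (2 * k + 3 : ℤ) ≤ m + 2)]
      have hk' : (0 : ℤ) ≤ k := by positivity
      have e1 := mul_le_mul_of_nonneg_right hm' (zero_le_one.trans hone)
      have e2 := mul_le_mul_of_nonneg_right hcard
        (show 0 ≤ walkCount (m + 2) (l ⟨0, by omega⟩ - 1) + 1 by linarith)
      have e3 := mul_le_mul_of_nonneg_left hone hk'
      linarith)
  rw [← hε] at hpos
  have hlt : 0 < ((m + 2 : ℕ) : ℤ) * ((-1) ^ l j *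
      (∏ i ∈ Finset.univ.erase j, (walkCount (m + 2) (l i - 1) + (-1) ^ l i) -
        ∏ i ∈ Finset.univ.erase j, walkCount (m + 2) (l i - 1))) :=
    mul_pos (by positivity) hpos
  rw [← hdiff, sub_pos] at hlt
  exact (dpColorFunction_le_permCover _ _ (lastEdgeTwist_inv j σ)).trans_lt (by exact_mod_cast hlt)
end
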